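/- arXiv:1109.3323 — 4 statements merged into one kernel-verified Lean document; each statement's English description precedes it below -/
import Mathlib

section
/- Let a, b be real numbers with a ≤ b and let c > 0. Then sup over τ ∈ [0,1) of ((1−τ)·a + τ·b + c·ln(1−τ)) is at least b − c·(1 + max(0, ln((b−a)/c))). -/
/-!
Put `u = 1 - τ ∈ (0, 1]`, `s = b - a` and `m = max s c`, so that the objective becomes
`b - u * s + c * log u`. The tangent line to `log` at `c / m` gives
`c * log u ≤ u * m - c - c * log (m / c)`, and `u * (m - s) ≤ c / m * (m - s)` because either
`m = s`, or `m = c` and `u ≤ 1 = c / m`. Both inequalities are equalities at `u = c / m`, so the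
maximum is `b - c * (s / m + log (m / c))`, where `s / m ≤ 1` and
`log (m / c) ≤ max 0 (log (s / c))`.
-/

section LogBarrier

open Real Set

lemma mul_log_le_mul_sub_sub_mul_log {c m u : ℝ} (hc : 0 < c) (hm : 0 < m) (hu : 0 < u) :
    c * log u ≤ u * m - c - c * log (m / c) := by
  have tangent : log (u * (m / c)) ≤ u * (m / c) - 1 := log_le_sub_one_of_pos (by positivity)
  rw [log_mul hu.ne' (by positivity)] at tangent
  calc c * log u ≤ c * (u * (m / c) - 1 - log (m / c)) := by gcongr; linarith
    _ = u * m - c - c * log (m / c) := by field_simp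

lemma mul_max_sub_le_div_max_mul {c u : ℝ} (s : ℝ) (hc : 0 < c) (hu : u ≤ 1) :
    u * (max s c - s) ≤ c / max s c * (max s c - s) := by
  rcases le_total c s with hcs | hsc
  · simp only [max_eq_left hcs, sub_self, mul_zero, le_refl]
  · rw [max_eq_right hsc, div_self hc.ne']
    exact mul_le_mul_of_nonneg_right hu (sub_nonneg.2 hsc)

lemma log_max_div_le_max_zero_log_div (s c : ℝ) : log (max s c / c) ≤ max 0 (log (s / c)) := by
  rcases max_choice s c with h | h <;> rw [h]
  · exact le_max_right _ _
  · exact log_div_self c ▸ le_max_left _ _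

lemma div_max_add_log_le {c : ℝ} (s : ℝ) (hc : 0 < c) :
    s / max s c + log (max s c / c) ≤ 1 + max 0 (log (s / c)) :=
  add_le_add (div_le_one_of_le₀ (le_max_left s c) (hc.le.trans (le_max_right s c)))
    (log_max_div_le_max_zero_log_div s c)

theorem stmt_3_general (a b : ℝ) {c : ℝ} (hc : 0 < c) :
    IsGreatest ((fun τ : ℝ => (1 - τ) * a + τ * b + c * log (1 - τ)) '' Ico (0 : ℝ) 1)
      (b - c * ((b - a) / max (b - a) c + log (max (b - a) c / c))) := by
  have slack {u : ℝ} (hu : u ≤ 1) := mul_max_sub_le_div_max_mul (b - a) hc hu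
  have hcm : c ≤ max (b - a) c := le_max_right _ _
  set m := max (b - a) c
  have hm : 0 < m := hc.trans_le hcm
  constructor
  · refine ⟨1 - c / m, ⟨sub_nonneg.2 ((div_le_one hm).2 hcm), sub_lt_self _ (by positivity)⟩, ?_⟩
    have log_optimizer : log (c / m) = -log (m / c) := by rw [← log_inv, inv_div]
    simp only [sub_sub_cancel, log_optimizer]
    ring
  · rintro _ ⟨τ, ⟨h0, h1⟩, rfl⟩
    have tangent := mul_log_le_mul_sub_sub_mul_log hc hm (sub_pos.2 h1)
    calc (1 - τ) * a + τ * b + c * log (1 - τ)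
        ≤ b + (1 - τ) * (m - (b - a)) - c - c * log (m / c) := by linarith
      _ ≤ b + c / m * (m - (b - a)) - c - c * log (m / c) := by
        gcongr b + ?_ - c - c * log (m / c)
        exact slack (sub_le_self 1 h0)
      _ = b - c * ((b - a) / m + log (m / c)) := by field_simp; ring

end LogBarrier

/-- Let `a ≤ b` and `c > 0`. Then the supremum over `τ ∈ [0,1)` of
`(1−τ)·a + τ·b + c·ln(1−τ)` is at least `b − c·(1 + max(0, ln((b−a)/c)))`. -/
theorem stmt_3 (a b c : ℝ) (hab : a ≤ b) (hc : 0 < c) :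
    b - c * (1 + max 0 (Real.log ((b - a) / c))) ≤
      sSup ((fun τ : ℝ => (1 - τ) * a + τ * b + c * Real.log (1 - τ)) '' Set.Ico (0 : ℝ) 1) := by
  rw [(stmt_3_general a b hc).csSup_eq]
  exact sub_le_sub_left (mul_le_mul_of_nonneg_left (div_max_add_log_le (b - a) hc) hc.le) b
end

section
/- Let H be an n×n real symmetric positive definite matrix and A an m×n real matrix with full row rank (its rows are linearly independent). Then A H⁻¹ Aᵀ is symmetric positive definite, and Aᵀ (A H⁻¹ Aᵀ)⁻¹ A ⪯ H in the Loewner order. -/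
open Matrix

/-! When `P` and `Q` are positive definite, both Schur complements `P - B Q⁻¹ Bᴴ` and `Q - Bᴴ P⁻¹ B`
of the block matrix `[P, B; Bᴴ, Q]` are positive semidefinite exactly when the block matrix is. For
`P = A H⁻¹ Aᴴ`, `B = A`, `Q = H` the first is zero and the second is `H - Aᴴ (A H⁻¹ Aᴴ)⁻¹ A`. -/

theorem posDef_mul_inv_mul_conjTranspose {K m n : Type*} [Field K] [PartialOrder K] [StarRing K]
    [Finite m] [Fintype n] [DecidableEq n] {H : Matrix n n K} {A : Matrix m n K}
    (hH : H.PosDef) (hA : LinearIndependent K A.row) : (A * H⁻¹ * Aᴴ).PosDef := by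
  have := Fintype.ofFinite m
  exact hH.inv.mul_mul_conjTranspose_same (vecMul_injective_iff.mpr hA)

theorem posSemidef_sub_conjTranspose_mul_inv_mul_iff {R m n : Type*} [CommRing R] [PartialOrder R]
    [StarRing R] [StarOrderedRing R] [Fintype m] [Fintype n] [DecidableEq m] [DecidableEq n]
    {P : Matrix m m R} {Q : Matrix n n R} [Invertible P] [Invertible Q]
    (hP : P.PosDef) (hQ : Q.PosDef) (B : Matrix m n R) :
    (Q - Bᴴ * P⁻¹ * B).PosSemidef ↔ (P - B * Q⁻¹ * Bᴴ).PosSemidef := by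
  rw [← hP.fromBlocks₁₁, hQ.fromBlocks₂₂]

theorem stmt_7_general {K m n : Type*} [Field K] [PartialOrder K] [StarRing K] [StarOrderedRing K]
    [Fintype m] [Fintype n] [DecidableEq m] [DecidableEq n] {H : Matrix n n K} {A : Matrix m n K}
    (hH : H.PosDef) (hA : LinearIndependent K A.row) :
    (A * H⁻¹ * Aᴴ).PosDef ∧ (H - Aᴴ * (A * H⁻¹ * Aᴴ)⁻¹ * A).PosSemidef := by
  have hS : (A * H⁻¹ * Aᴴ).PosDef := posDef_mul_inv_mul_conjTranspose hH hA
  have := hS.isUnit.invertible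
  have := hH.isUnit.invertible
  have hcompl : (A * H⁻¹ * Aᴴ - A * H⁻¹ * Aᴴ).PosSemidef := by
    rw [sub_self]
    exact .zero
  exact ⟨hS, (posSemidef_sub_conjTranspose_mul_inv_mul_iff hS hH A).mpr hcompl⟩

/-- Let `H` be an `n×n` real symmetric positive definite matrix and `A` an `m×n`
real matrix with full row rank (its rows are linearly independent). Then
`A H⁻¹ Aᵀ` is symmetric positive definite, and `Aᵀ (A H⁻¹ Aᵀ)⁻¹ A ⪯ H` in the
Loewner order. -/
theorem stmt_7 {n m : ℕ} (H : Matrix (Fin n) (Fin n) ℝ) (A : Matrix (Fin m) (Fin n) ℝ)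
    (hHsym : H.IsSymm) (hH : H.PosDef)
    (hA : LinearIndependent ℝ (fun i : Fin m => A i)) :
    (A * H⁻¹ * Aᵀ).IsSymm ∧ (A * H⁻¹ * Aᵀ).PosDef ∧
    (H - Aᵀ * (A * H⁻¹ * Aᵀ)⁻¹ * A).PosSemidef := by
  obtain ⟨hS, hle⟩ := conjTranspose_eq_transpose_of_trivial A ▸ stmt_7_general hH hA
  exact ⟨isHermitian_iff_isSymm.mp hS.isHermitian, hS, hle⟩
end

section
/- Let 0 ≤ δ < 1 and β > 0 satisfy β < 1 − δ and (1−δ)β ≥ 2δ. Define p := δ·((1−δ)^{−2} + 2(1−δ)^{−1}), q := (1−δ)β − 2δ, and θ := (√(p² + 4q) − p)/2. Then θ·(1 − δ − β) > β if and only if −2δ(1−δ)² + (1−δ)((1+δ)² − p)·β + (p − 3 + 2δ − 2δ²)·β² + (1−δ)·β³ > 0. -/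
/-!
The number `θ = (√(p² + 4q) - p) / 2` is the larger root of `t² + p t - q`. For `q ≥ 0` the other
root is nonpositive, so at a positive `t` the quadratic has the sign of `t - θ`. At `t = β / r`
with `r = 1 - δ - β`, clearing denominators in `t² + p t < q` leaves
`0 < q r² - p β r - β²`, and this is the cubic in `β` once `q = (1 - δ) β - 2 δ` is expanded.
-/

theorem lt_quadratic_root_iff {p q t : ℝ} (hq : 0 ≤ q) (ht : 0 < t) :
    t < (√(p ^ 2 + 4 * q) - p) / 2 ↔ t ^ 2 + p * t < q := by
  set s := √(p ^ 2 + 4 * q)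
  have s_sq : s ^ 2 = p ^ 2 + 4 * q := Real.sq_sqrt (by positivity)
  have neg_p_le_s : -p ≤ s := Real.le_sqrt_of_sq_le (by linarith [neg_sq p])
  have other_factor_pos : 0 < t + (s + p) / 2 := by linarith
  have factorization : ((s - p) / 2 - t) * (t + (s + p) / 2) = q - (t ^ 2 + p * t) := by
    linear_combination s_sq / 4
  calc t < (s - p) / 2
      ↔ 0 < (s - p) / 2 - t := sub_pos.symm
    _ ↔ 0 < ((s - p) / 2 - t) * (t + (s + p) / 2) :=
        (mul_pos_iff_of_pos_right other_factor_pos).symm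
    _ ↔ t ^ 2 + p * t < q := by rw [factorization, sub_pos]

theorem lt_quadratic_root_mul_iff {p q b r : ℝ} (hq : 0 ≤ q) (hb : 0 < b) (hr : 0 < r) :
    b < (√(p ^ 2 + 4 * q) - p) / 2 * r ↔ b ^ 2 + p * b * r < q * r ^ 2 := by
  have clear_denominators : (b / r) ^ 2 + p * (b / r) = (b ^ 2 + p * b * r) / r ^ 2 := by
    field_simp
  rw [← div_lt_iff₀ hr, lt_quadratic_root_iff hq (div_pos hb hr), clear_denominators,
    div_lt_iff₀ (pow_pos hr 2)]

theorem stmt_12_general {δ β : ℝ} (p : ℝ) (hβ0 : 0 < β) (hβ1 : β < 1 - δ)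
    (hq : 2 * δ ≤ (1 - δ) * β) :
    (√(p ^ 2 + 4 * ((1 - δ) * β - 2 * δ)) - p) / 2 * (1 - δ - β) > β ↔
      -2 * δ * (1 - δ) ^ 2 + (1 - δ) * ((1 + δ) ^ 2 - p) * β
        + (p - 3 + 2 * δ - 2 * δ ^ 2) * β ^ 2 + (1 - δ) * β ^ 3 > 0 := by
  have cubic_eq :
      -2 * δ * (1 - δ) ^ 2 + (1 - δ) * ((1 + δ) ^ 2 - p) * β
          + (p - 3 + 2 * δ - 2 * δ ^ 2) * β ^ 2 + (1 - δ) * β ^ 3 =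
        ((1 - δ) * β - 2 * δ) * (1 - δ - β) ^ 2 - (β ^ 2 + p * β * (1 - δ - β)) := by
    ring
  rw [cubic_eq, gt_iff_lt, gt_iff_lt, sub_pos]
  exact lt_quadratic_root_mul_iff (sub_nonneg.2 hq) hβ0 (sub_pos.2 hβ1)

/-- Let `0 ≤ δ < 1` and `β > 0` satisfy `β < 1 − δ` and `(1−δ)β ≥ 2δ`. Define
`p := δ·((1−δ)⁻² + 2(1−δ)⁻¹)`, `q := (1−δ)β − 2δ`, and `θ := (√(p² + 4q) − p)/2`.
Then `θ·(1 − δ − β) > β` if and only if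
`−2δ(1−δ)² + (1−δ)((1+δ)² − p)·β + (p − 3 + 2δ − 2δ²)·β² + (1−δ)·β³ > 0`. -/
theorem stmt_12 (δ β : ℝ) (hδ0 : 0 ≤ δ) (hδ1 : δ < 1) (hβ0 : 0 < β)
    (hβ1 : β < 1 - δ) (hq : 2 * δ ≤ (1 - δ) * β) :
    (Real.sqrt ((δ * ((1 - δ)⁻¹ ^ 2 + 2 * (1 - δ)⁻¹)) ^ 2 + 4 * ((1 - δ) * β - 2 * δ))
        - δ * ((1 - δ)⁻¹ ^ 2 + 2 * (1 - δ)⁻¹)) / 2 * (1 - δ - β) > β ↔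
      -2 * δ * (1 - δ) ^ 2
        + (1 - δ) * ((1 + δ) ^ 2 - δ * ((1 - δ)⁻¹ ^ 2 + 2 * (1 - δ)⁻¹)) * β
        + (δ * ((1 - δ)⁻¹ ^ 2 + 2 * (1 - δ)⁻¹) - 3 + 2 * δ - 2 * δ ^ 2) * β ^ 2
        + (1 - δ) * β ^ 3 > 0 :=
  stmt_12_general _ hβ0 hβ1 hq
end

section
/- Let 0 < β < (3−√5)/2 and set Δ̄ := √β·(1 − √β − β)/(1 + 2√β). Then Δ̄ > 0, and for all λ and Δ with 0 ≤ λ ≤ β and 0 ≤ Δ ≤ Δ̄, one has 1 − 2Δ − λ > 0 and ((λ + Δ)/(1 − 2Δ − λ))² ≤ β. -/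
/-!
For `λ, Δ ≥ 0` the ratio `(λ + Δ) / (1 − 2Δ − λ)` increases with `λ` and `Δ` while its denominator
is positive, so it is largest at the corner `(β, Δ̄)`. There the numerator and the denominator are
`√β (1 + β) / (1 + 2√β)` and `(1 + β) / (1 + 2√β)`, so the ratio is exactly `√β`. The threshold
`(3 − √5) / 2` is `ψ²`, where `-ψ = 1 / φ` is the positive root of `1 - s - s²`.
-/

open Real
open scoped goldenRatio

/-- The radius `Δ̄` of the admissible displacements of the central path point for the neighborhood
`λ ≤ β`: the displacement at which the decrement bound started from `λ = β` returns to `β`. -/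
noncomputable def maxDisplacement (β : ℝ) : ℝ := √β * (1 - √β - β) / (1 + 2 * √β)

/-- The ratio whose square bounds the Newton decrement after a full Newton step, in terms of the
current decrement `lam` and the displacement `Δ` of the central path point. -/
noncomputable def decrementRatio (lam Δ : ℝ) : ℝ := (lam + Δ) / (1 - 2 * Δ - lam)

lemma one_sub_sub_sq_eq_mul (s : ℝ) : 1 - s - s ^ 2 = (s + φ) * (-ψ - s) := by
  linear_combination goldenRatio_mul_goldenConj + s * goldenRatio_add_goldenConj

lemma goldenConj_sq_eq_three_sub_sqrt_five_div_two : ψ ^ 2 = (3 - √5) / 2 := by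
  rw [goldenConj_sq, goldenConj]
  ring

lemma one_sub_sqrt_sub_pos_iff {β : ℝ} (hβ : 0 ≤ β) :
    0 < 1 - √β - β ↔ β < (3 - √5) / 2 := by
  have hfactor : 1 - √β - β = (√β + φ) * (-ψ - √β) := by
    rw [← one_sub_sub_sq_eq_mul, sq_sqrt hβ]
  have hleft : 0 < √β + φ := add_pos_of_nonneg_of_pos (sqrt_nonneg β) goldenRatio_pos
  rw [hfactor, mul_pos_iff_of_pos_left hleft, sub_pos, sqrt_lt' (neg_pos.2 goldenConj_neg),
    neg_sq, goldenConj_sq_eq_three_sub_sqrt_five_div_two]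

lemma maxDisplacement_pos_iff {β : ℝ} (hβ : 0 < β) :
    0 < maxDisplacement β ↔ β < (3 - √5) / 2 := by
  rw [maxDisplacement, div_pos_iff_of_pos_right (by positivity),
    mul_pos_iff_of_pos_left (sqrt_pos.2 hβ), one_sub_sqrt_sub_pos_iff hβ.le]

lemma add_maxDisplacement {β : ℝ} (hβ : 0 ≤ β) :
    β + maxDisplacement β = √β * ((1 + β) / (1 + 2 * √β)) := by
  rw [maxDisplacement]
  field_simp
  linear_combination -sq_sqrt hβ

lemma one_sub_two_mul_maxDisplacement_sub {β : ℝ} (hβ : 0 ≤ β) :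
    1 - 2 * maxDisplacement β - β = (1 + β) / (1 + 2 * √β) := by
  rw [maxDisplacement]
  field_simp
  linear_combination 2 * sq_sqrt hβ

lemma one_sub_two_mul_maxDisplacement_sub_pos {β : ℝ} (hβ : 0 ≤ β) :
    0 < 1 - 2 * maxDisplacement β - β := by
  rw [one_sub_two_mul_maxDisplacement_sub hβ]
  positivity

lemma decrementRatio_maxDisplacement {β : ℝ} (hβ : 0 ≤ β) :
    decrementRatio β (maxDisplacement β) = √β := by
  have hden : (1 + β) / (1 + 2 * √β) ≠ 0 := by positivity
  rw [decrementRatio, add_maxDisplacement hβ, one_sub_two_mul_maxDisplacement_sub hβ,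
    mul_div_cancel_right₀ _ hden]

lemma decrementRatio_le_decrementRatio {lam₁ lam₂ Δ₁ Δ₂ : ℝ} (hlam : lam₁ ≤ lam₂) (hΔ : Δ₁ ≤ Δ₂)
    (hnum : 0 ≤ lam₂ + Δ₂) (hden : 0 < 1 - 2 * Δ₂ - lam₂) :
    decrementRatio lam₁ Δ₁ ≤ decrementRatio lam₂ Δ₂ :=
  div_le_div₀ hnum (by linarith) hden (by linarith)

/-- Let `0 < β < (3−√5)/2` and set `Δ̄ := √β·(1 − √β − β)/(1 + 2√β)`. Then
`Δ̄ > 0`, and for all `λ` and `Δ` with `0 ≤ λ ≤ β` and `0 ≤ Δ ≤ Δ̄`, one has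
`1 − 2Δ − λ > 0` and `((λ + Δ)/(1 − 2Δ − λ))² ≤ β`. -/
theorem stmt_14 (β : ℝ) (hβ0 : 0 < β) (hβ1 : β < (3 - Real.sqrt 5) / 2) :
    0 < Real.sqrt β * (1 - Real.sqrt β - β) / (1 + 2 * Real.sqrt β) ∧
    ∀ lam Δ : ℝ, 0 ≤ lam → lam ≤ β → 0 ≤ Δ →
      Δ ≤ Real.sqrt β * (1 - Real.sqrt β - β) / (1 + 2 * Real.sqrt β) →
      0 < 1 - 2 * Δ - lam ∧ ((lam + Δ) / (1 - 2 * Δ - lam)) ^ 2 ≤ β := by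
  refine ⟨(maxDisplacement_pos_iff hβ0).2 hβ1,
    fun lam Δ hlam hlamβ hΔ (hΔmax : Δ ≤ maxDisplacement β) => ?_⟩
  have hcorner : 0 < 1 - 2 * maxDisplacement β - β :=
    one_sub_two_mul_maxDisplacement_sub_pos hβ0.le
  have hden : 0 < 1 - 2 * Δ - lam := by linarith
  have hratio_nonneg : 0 ≤ decrementRatio lam Δ := div_nonneg (add_nonneg hlam hΔ) hden.le
  have hratio_le : decrementRatio lam Δ ≤ √β :=
    calc decrementRatio lam Δ ≤ decrementRatio β (maxDisplacement β) :=
          decrementRatio_le_decrementRatio hlamβ hΔmax (by linarith) hcorner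
      _ = √β := decrementRatio_maxDisplacement hβ0.le
  exact ⟨hden, (le_sqrt hratio_nonneg hβ0.le).1 hratio_le⟩
end
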